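/- Let k ≥ 2 be an integer and m a nonnegative integer. Define the normalized integral A_k(m) = ((2m + k − 1)! / (m! · (2m + k − 1)! · (k/2)_m)) · (k/(2(k − 1)))^m · ∫_{[0,∞)^k} (e₂(x))^m e^{−e₁(x)} dx, i.e., A_k(m) = (1/(m! · (k/2)_m)) · (k/(2(k − 1)))^m · ∫_{[0,∞)^k} (e₂(x))^m e^{−e₁(x)} dx, with the convention A_1(m) = 0. Then A_k(m + 1) − A_k(m) = ((k(k − 2))^{m+1} · ((k − 1)/2)_{m+1}) / ((k − 1)^{2(m+1)} · (k/2)_{m+1}) · A_{k−1}(m + 1). -/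

import Mathlib

/-!
Against `exp (-e₁)` on the orthant, a monomial `x ^ d` integrates to `d! = ∏ i, (d i)!`, so the
integral of a polynomial is an algebraic functional `L`. Integrating by parts in each variable and
summing gives `∑ i, L (∂ᵢ p) + ∑ i, L (p|_{xᵢ = 0}) = k * L p`. For `p = e₂ ^ (m + 1)` the boundary
terms are the same integral in `k - 1` variables, while `∑ i, ∂ᵢ p` is a multiple of `e₁ * e₂ ^ m`,
on which `L` is evaluated by Euler's identity: `L (e₁ * q) = (k + deg q) * L q`. The normalization
of `A_k(m)` turns the resulting recurrence into the stated difference equation.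
-/

open MeasureTheory Finset

/-- `e₁(x) = ∑ᵢ xᵢ` -/
noncomputable def e1 {k : ℕ} (x : Fin k → ℝ) : ℝ := ∑ i, x i

/-- `e₂(x) = ∑_{i<j} xᵢ xⱼ` -/
noncomputable def e2 {k : ℕ} (x : Fin k → ℝ) : ℝ := ∑ i, ∑ j ∈ Finset.Ioi i, x i * x j

/-- Pochhammer symbol `(y)ₘ = ∏_{i=0}^{m-1} (y + i)` -/
noncomputable def poch (y : ℝ) (m : ℕ) : ℝ := ∏ i ∈ Finset.range m, (y + i)

section ElementarySymmetric

open MvPolynomial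

variable {R σ τ : Type*} [CommSemiring R]

theorem isHomogeneous_esymm [Fintype σ] (r : ℕ) : (esymm σ R r).IsHomogeneous r := by
  refine IsHomogeneous.sum _ _ _ fun t ht => ?_
  have h := IsHomogeneous.prod t (fun i => (X i : MvPolynomial σ R)) (fun _ => 1)
    fun i _ => isHomogeneous_X R i
  simpa [(mem_powersetCard.mp ht).2] using h

theorem killCompl_esymm [Fintype σ] [Fintype τ] {f : σ → τ} (hf : Function.Injective f) (r : ℕ) :
    killCompl hf (esymm τ R r) = esymm σ R r := by
  have hX (i : σ) : killCompl hf (X (f i) : MvPolynomial τ R) = X i := by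
    rw [← rename_X f, killCompl_rename_app]
  rw [esymm, map_sum, esymm]
  refine (sum_of_injOn (Finset.map ⟨f, hf⟩) (map_injective _).injOn (fun t ht => ?_)
    (fun t ht ht' => ?_) fun t _ => ?_).symm
  · simpa using ht
  · obtain ⟨j, hj, hjf⟩ : ∃ j ∈ t, j ∉ Set.range f := by
      by_contra! h
      have hsub : t ⊆ univ.map ⟨f, hf⟩ := fun j hj => by simpa using h j hj
      obtain ⟨s, -, rfl⟩ := subset_map_iff.mp hsub
      exact ht' ⟨s, by simpa using ht, rfl⟩
    rw [map_prod]
    exact prod_eq_zero hj (by simp [killCompl, hjf])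
  · simp only [prod_map, map_prod, Function.Embedding.coeFn_mk, hX]

theorem pderiv_prod_X [DecidableEq σ] (i : σ) (t : Finset σ) :
    pderiv i (∏ j ∈ t, (X j : MvPolynomial σ R)) = if i ∈ t then ∏ j ∈ t.erase i, X j else 0 := by
  induction t using Finset.induction_on with
  | empty => simp
  | insert a t ha ih =>
    rw [prod_insert ha, pderiv_mul, ih]
    obtain rfl | hia := eq_or_ne i a
    · simp [ha]
    · rw [pderiv_X_of_ne hia.symm, erase_insert_of_ne hia.symm, prod_insert (by simp [ha])]
      simp [hia]

-- The truncated subtraction is harmless: for `r > card σ` both sides vanish.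
theorem sum_pderiv_esymm_succ [Fintype σ] (r : ℕ) :
    ∑ i, pderiv i (esymm σ R (r + 1)) = (Fintype.card σ - r) • esymm σ R r := by
  classical
  calc ∑ i, pderiv i (esymm σ R (r + 1))
      = ∑ t ∈ powersetCard (r + 1) univ, ∑ i ∈ t, ∏ j ∈ t.erase i, X j := by
        simp only [esymm, map_sum, pderiv_prod_X]
        rw [sum_comm]
        simp only [sum_ite_mem, univ_inter]
    _ = ∑ s ∈ powersetCard r univ, ∑ i ∈ sᶜ, ∏ j ∈ s, X j := by
        rw [sum_sigma', sum_sigma']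
        refine sum_nbij' (fun p => ⟨p.1.erase p.2, p.2⟩) (fun p => ⟨insert p.2 p.1, p.2⟩)
          ?_ ?_ ?_ ?_ ?_ <;> simp +contextual [card_erase_of_mem, card_insert_of_notMem]
    _ = (Fintype.card σ - r) • esymm σ R r := by
        rw [esymm, smul_sum]
        refine sum_congr rfl fun s hs => ?_
        rw [sum_const, card_compl, (mem_powersetCard.mp hs).2]

theorem sum_pderiv_esymm_succ_pow [Fintype σ] (r m : ℕ) :
    ∑ i, pderiv i (esymm σ R (r + 1) ^ (m + 1)) =
      ((m + 1) * (Fintype.card σ - r)) • (esymm σ R r * esymm σ R (r + 1) ^ m) := by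
  simp only [pderiv_pow, ← mul_sum, sum_pderiv_esymm_succ, add_tsub_cancel_right, nsmul_eq_mul]
  push_cast
  ring

theorem aeval_esymm_two [Fintype σ] [LinearOrder σ] [LocallyFiniteOrderTop σ] (x : σ → R) :
    aeval x (esymm σ R 2) = ∑ i, ∑ j ∈ Ioi i, x i * x j := by
  simp only [esymm, map_sum, map_prod, aeval_X, sum_sigma']
  refine (sum_bij (fun p _ => {p.1, p.2}) ?mem ?inj ?surj ?eq).symm
  case mem =>
    rintro ⟨i, j⟩ h
    simp only [mem_sigma, mem_univ, mem_Ioi, true_and] at h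
    simp [card_pair h.ne]
  case inj =>
    rintro ⟨i, j⟩ h ⟨i', j'⟩ h' heq
    simp only [mem_sigma, mem_univ, mem_Ioi, true_and] at h h'
    rw [← coe_inj, coe_pair, coe_pair, Set.pair_eq_pair_iff] at heq
    obtain ⟨rfl, rfl⟩ | ⟨rfl, rfl⟩ := heq
    · rfl
    · exact absurd h h'.asymm
  case surj =>
    intro t ht
    obtain ⟨i, j, hij, rfl⟩ := card_eq_two.mp (mem_powersetCard.mp ht).2
    obtain h | h := hij.lt_or_gt
    · exact ⟨⟨i, j⟩, by simpa using h, rfl⟩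
    · exact ⟨⟨j, i⟩, by simpa using h, pair_comm j i⟩
  case eq =>
    rintro ⟨i, j⟩ h
    simp only [mem_sigma, mem_univ, mem_Ioi, true_and] at h
    simp [prod_pair h.ne]

end ElementarySymmetric

section FactorialFunctional

open MvPolynomial

variable {R σ τ : Type*} [CommSemiring R]

/-- The linear functional `x ^ d ↦ d! = ∏ i, (d i)!` on polynomials. Over `ℝ` and for finite `σ`
it is the integral against `exp (-∑ i, x i)` over the positive orthant. -/
noncomputable def factorialFunctional (R σ : Type*) [CommSemiring R] : MvPolynomial σ R →ₗ[R] R :=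
  (basisMonomials σ R).constr R fun d => d.prod fun _ a => (a.factorial : R)

theorem factorialFunctional_monomial (d : σ →₀ ℕ) (r : R) :
    factorialFunctional R σ (monomial d r) = r * d.prod fun _ a => (a.factorial : R) := by
  have h : monomial d r = r • basisMonomials σ R d := by
    rw [coe_basisMonomials, smul_monomial, smul_eq_mul, mul_one]
  rw [h, map_smul, factorialFunctional, Module.Basis.constr_basis, smul_eq_mul]

theorem factorialFunctional_rename {f : σ → τ} (hf : Function.Injective f)
    (p : MvPolynomial σ R) :
    factorialFunctional R τ (rename f p) = factorialFunctional R σ p := by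
  induction p using MvPolynomial.induction_on' with
  | add p q hp hq => simp only [map_add, hp, hq]
  | monomial d r =>
    rw [rename_monomial, factorialFunctional_monomial, factorialFunctional_monomial,
      Finsupp.prod_mapDomain_index_inj hf]

theorem factorialFunctional_X_mul (i : σ) (p : MvPolynomial σ R) :
    factorialFunctional R σ (X i * p) =
      factorialFunctional R σ p + factorialFunctional R σ (X i * pderiv i p) := by
  induction p using MvPolynomial.induction_on' with
  | add p q hp hq => simp only [map_add, mul_add, hp, hq]; ring
  | monomial d r =>
    have hfact : (d + Finsupp.single i 1).prod (fun _ a => (a.factorial : R)) =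
        (d i + 1) * d.prod fun _ a => (a.factorial : R) := by
      classical
      rw [← Finsupp.mul_prod_erase' d i _ (by simp),
        ← Finsupp.mul_prod_erase' (d + Finsupp.single i 1) i _ (by simp), Finsupp.erase_add,
        Finsupp.erase_single, add_zero, Finsupp.add_apply, Finsupp.single_eq_same,
        Nat.factorial_succ]
      push_cast
      ring
    rw [X_mul_pderiv_monomial, map_nsmul, mul_comm, ← pow_one (X i), ← monomial_add_single,
      factorialFunctional_monomial, factorialFunctional_monomial, hfact, nsmul_eq_mul]
    ring

/-- Integration by parts in `x i`: here `killCompl hf` restricts to the facet `x i = 0` and gives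
the boundary term. -/
theorem factorialFunctional_pderiv_add_killCompl {f : σ → τ} (hf : Function.Injective f) {i : τ}
    (hi : Set.range f = {i}ᶜ) (p : MvPolynomial τ R) :
    factorialFunctional R τ (pderiv i p) + factorialFunctional R σ (killCompl hf p) =
      factorialFunctional R τ p := by
  induction p using MvPolynomial.induction_on' with
  | add p q hp hq =>
    simp only [map_add, ← hp, ← hq]
    ring
  | monomial d r =>
    obtain hd | hd := eq_or_ne (d i) 0
    · have hsupp : ↑d.support ⊆ Set.range f := by
        rw [hi, Set.subset_compl_singleton_iff]
        simpa using hd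
      rw [killCompl_monomial_eq_monomial_comapDomain_of_subset hf r hsupp,
        ← factorialFunctional_rename hf, rename_monomial,
        Finsupp.mapDomain_comapDomain f hf d hsupp, pderiv_monomial, hd]
      simp
    · obtain ⟨d, rfl⟩ : ∃ e, d = e + Finsupp.single i 1 :=
        ⟨d - Finsupp.single i 1, (Finsupp.sub_add_single_one_cancel hd).symm⟩
      rw [killCompl_monomial_eq_zero_of_notMem_range hf r (a := i) (by simp) (by simp [hi]),
        map_zero, add_zero, monomial_add_single, pow_one, mul_comm, factorialFunctional_X_mul,
        pderiv_mul, pderiv_X_self, one_mul, map_add]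

theorem factorialFunctional_esymm_one_mul [Fintype σ] {d : ℕ} {p : MvPolynomial σ R}
    (hp : p.IsHomogeneous d) :
    factorialFunctional R σ (esymm σ R 1 * p) =
      (Fintype.card σ + d) * factorialFunctional R σ p := by
  simp only [esymm_one, sum_mul, map_sum, factorialFunctional_X_mul _ p, sum_add_distrib]
  rw [← map_sum _ fun i => X i * pderiv i p, hp.sum_X_mul_pderiv, map_nsmul]
  simp [add_mul]

theorem factorialFunctional_esymm_two_pow_succ (n m : ℕ) :
    (n + 1) * factorialFunctional R (Fin (n + 1)) (esymm (Fin (n + 1)) R 2 ^ (m + 1)) =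
      (m + 1) * n * (n + 1 + 2 * m) *
          factorialFunctional R (Fin (n + 1)) (esymm (Fin (n + 1)) R 2 ^ m) +
        (n + 1) * factorialFunctional R (Fin n) (esymm (Fin n) R 2 ^ (m + 1)) := by
  set E := esymm (Fin (n + 1)) R 2 with hE
  have hderiv : ∑ i, factorialFunctional R (Fin (n + 1)) (pderiv i (E ^ (m + 1))) =
      (m + 1) * n * (n + 1 + 2 * m) * factorialFunctional R (Fin (n + 1)) (E ^ m) := by
    rw [← map_sum, hE, sum_pderiv_esymm_succ_pow, map_nsmul,
      factorialFunctional_esymm_one_mul ((isHomogeneous_esymm 2).pow m)]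
    simp only [Fintype.card_fin, nsmul_eq_mul, add_tsub_cancel_right]
    push_cast
    ring
  calc (n + 1) * factorialFunctional R (Fin (n + 1)) (E ^ (m + 1))
      = ∑ i, (factorialFunctional R (Fin (n + 1)) (pderiv i (E ^ (m + 1))) +
          factorialFunctional R (Fin n)
            (killCompl i.succAbove_right_injective (E ^ (m + 1)))) := by
        simp only [factorialFunctional_pderiv_add_killCompl _ (Fin.range_succAbove _)]
        simp
    _ = _ := by
        rw [sum_add_distrib, hderiv]
        simp [hE, killCompl_esymm]

end FactorialFunctional

section OrthantIntegral

open MvPolynomial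

variable {σ : Type*} [Fintype σ]

theorem integrableOn_pow_mul_exp_neg (a : ℕ) :
    IntegrableOn (fun t : ℝ => t ^ a * Real.exp (-t)) (Set.Ici 0) := by
  have h := Real.GammaIntegral_convergent (s := a + 1) (by positivity)
  simp only [add_sub_cancel_right, Real.rpow_natCast] at h
  rw [integrableOn_Ici_iff_integrableOn_Ioi]
  simpa only [mul_comm] using h

theorem integral_pow_mul_exp_neg (a : ℕ) :
    ∫ t in Set.Ici (0 : ℝ), t ^ a * Real.exp (-t) = a.factorial := by
  have h := Real.Gamma_eq_integral (s := a + 1) (by positivity)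
  simp only [add_sub_cancel_right, Real.rpow_natCast, Real.Gamma_nat_eq_factorial] at h
  rw [integral_Ici_eq_integral_Ioi, h]
  simp only [mul_comm]

theorem eval_monomial_mul_exp_neg_sum (d : σ →₀ ℕ) (r : ℝ) (x : σ → ℝ) :
    eval x (monomial d r) * Real.exp (-∑ i, x i) =
      r * ∏ i, (x i ^ d i * Real.exp (-(x i))) := by
  rw [eval_monomial, Finsupp.prod_fintype _ _ fun _ => pow_zero _, ← sum_neg_distrib,
    Real.exp_sum, prod_mul_distrib, mul_assoc]

theorem integrableOn_eval_mul_exp_neg_sum (p : MvPolynomial σ ℝ) :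
    IntegrableOn (fun x : σ → ℝ => eval x p * Real.exp (-∑ i, x i))
      (Set.univ.pi fun _ => Set.Ici 0) := by
  induction p using MvPolynomial.induction_on' with
  | add p q hp hq =>
    simp only [map_add, add_mul]
    exact hp.add hq
  | monomial d r =>
    simp only [eval_monomial_mul_exp_neg_sum]
    rw [IntegrableOn, volume_pi, Measure.restrict_pi_pi]
    exact (Integrable.fintype_prod fun i => integrableOn_pow_mul_exp_neg (d i)).const_mul r

theorem integral_eval_mul_exp_neg_sum (p : MvPolynomial σ ℝ) :
    ∫ x in Set.univ.pi fun _ => Set.Ici (0 : ℝ), eval x p * Real.exp (-∑ i, x i) =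
      factorialFunctional ℝ σ p := by
  induction p using MvPolynomial.induction_on' with
  | add p q hp hq =>
    simp only [map_add, add_mul]
    rw [integral_add (integrableOn_eval_mul_exp_neg_sum p) (integrableOn_eval_mul_exp_neg_sum q),
      hp, hq]
  | monomial d r =>
    simp only [eval_monomial_mul_exp_neg_sum]
    rw [factorialFunctional_monomial, Finsupp.prod_fintype _ _ fun _ => by simp,
      integral_const_mul, volume_pi, Measure.restrict_pi_pi,
      integral_fintype_prod_eq_prod fun i (t : ℝ) => t ^ d i * Real.exp (-t)]
    simp only [integral_pow_mul_exp_neg]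

end OrthantIntegral

section OrthantMoments

open MvPolynomial

/-- The moment `∫ e₂ᵐ exp (-e₁)` over the orthant `[0, ∞)ⁿ`. -/
noncomputable def e2Moment (n m : ℕ) : ℝ :=
  ∫ x : Fin n → ℝ in Set.univ.pi fun _ => Set.Ici (0 : ℝ), e2 x ^ m * Real.exp (-(e1 x))

theorem e2Moment_eq_factorialFunctional (n m : ℕ) :
    e2Moment n m = factorialFunctional ℝ (Fin n) (esymm (Fin n) ℝ 2 ^ m) := by
  simp only [← integral_eval_mul_exp_neg_sum, map_pow, ← aeval_eq_eval, aeval_esymm_two]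
  rfl

theorem e2Moment_one_succ (m : ℕ) : e2Moment 1 (m + 1) = 0 := by
  simp [e2Moment, e2]

theorem e2Moment_succ_succ (n m : ℕ) :
    (n + 1) * e2Moment (n + 1) (m + 1) =
      (m + 1) * n * (n + 1 + 2 * m) * e2Moment (n + 1) m + (n + 1) * e2Moment n (m + 1) := by
  simpa only [e2Moment_eq_factorialFunctional] using
    factorialFunctional_esymm_two_pow_succ (R := ℝ) n m

end OrthantMoments

section Normalization

/-- The factor `(y / (2 (y - 1)))ᵐ / (m! (y / 2)ₘ)` by which `A_y(m)` normalizes the integral,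
for a real parameter `y` in place of the integer `k`. -/
noncomputable def momentNormalization (y : ℝ) (m : ℕ) : ℝ :=
  1 / (m.factorial * poch (y / 2) m) * (y / (2 * (y - 1))) ^ m

theorem poch_pos {y : ℝ} (hy : 0 < y) (m : ℕ) : 0 < poch y m :=
  prod_pos fun i _ => by positivity

theorem momentNormalization_succ {y : ℝ} (hy : 1 < y) (m : ℕ) :
    momentNormalization y (m + 1) * ((m + 1) * (y - 1) * (y + 2 * m)) =
      y * momentNormalization y m := by
  have : 0 < y - 1 := sub_pos.mpr hy
  have hpoch := poch_pos (half_pos (zero_lt_one.trans hy)) m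
  have hsucc : poch (y / 2) (m + 1) = poch (y / 2) m * ((y + 2 * m) / 2) := by
    rw [poch, prod_range_succ, ← poch]
    ring
  have hbase : 2 * (y - 1) * (y / (2 * (y - 1))) = y := mul_div_cancel₀ _ (by positivity)
  rw [momentNormalization, momentNormalization, hsucc, Nat.factorial_succ, pow_succ]
  generalize y / (2 * (y - 1)) = b at hbase ⊢
  push_cast
  have : y + 2 * m ≠ 0 := by positivity
  field_simp
  linear_combination b ^ m * hbase

theorem momentNormalization_eq_mul_sub_one {y : ℝ} (hy : 2 < y) (m : ℕ) :
    momentNormalization y m =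
      (y * (y - 2)) ^ m * poch ((y - 1) / 2) m / ((y - 1) ^ (2 * m) * poch (y / 2) m) *
        momentNormalization (y - 1) m := by
  have hpoch := poch_pos (y := (y - 1) / 2) (by linarith) m
  have h1 : y - 1 ≠ 0 := by linarith
  have h2 : y - 2 ≠ 0 := by linarith
  have hbase : y / (2 * (y - 1)) = y * (y - 2) / (y - 1) ^ 2 * ((y - 1) / (2 * (y - 1 - 1))) := by
    rw [show y - 1 - 1 = y - 2 by ring]
    field_simp
  rw [momentNormalization, momentNormalization, hbase, mul_pow, div_pow, ← pow_mul]
  field_simp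

theorem normalized_e2Moment_sub {n : ℕ} (hn : 0 < n) (m : ℕ) :
    momentNormalization (n + 1) (m + 1) * e2Moment (n + 1) (m + 1) -
        momentNormalization (n + 1) m * e2Moment (n + 1) m =
      momentNormalization (n + 1) (m + 1) * e2Moment n (m + 1) := by
  have hmoment := e2Moment_succ_succ n m
  have hnorm := momentNormalization_succ (y := n + 1) (by simpa using hn) m
  refine mul_left_cancel₀ (show (n + 1 : ℝ) ≠ 0 by positivity) ?_
  linear_combination momentNormalization (n + 1) (m + 1) * hmoment + e2Moment (n + 1) m * hnorm

end Normalization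

theorem stmt6 (k m : ℕ) (hk : 2 ≤ k) (A : ℕ → ℕ → ℝ)
    (hA1 : ∀ m' : ℕ, A 1 m' = 0)
    (hA : ∀ k' m' : ℕ, 2 ≤ k' →
      A k' m' =
        1 / ((m'.factorial : ℝ) * poch ((k' : ℝ) / 2) m') *
          ((k' : ℝ) / (2 * ((k' : ℝ) - 1))) ^ m' *
          ∫ x : Fin k' → ℝ in Set.univ.pi fun _ => Set.Ici (0 : ℝ),
            e2 x ^ m' * Real.exp (-(e1 x))) :
    A k (m + 1) - A k m =
      ((k * (k - 2) : ℕ) : ℝ) ^ (m + 1) * poch (((k - 1 : ℕ) : ℝ) / 2) (m + 1) /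
          (((k - 1 : ℕ) : ℝ) ^ (2 * (m + 1)) * poch ((k : ℝ) / 2) (m + 1)) *
        A (k - 1) (m + 1) := by
  have hA' (k' m' : ℕ) (hk' : 2 ≤ k') : A k' m' = momentNormalization k' m' * e2Moment k' m' :=
    hA k' m' hk'
  have hdiff : A k (m + 1) - A k m = momentNormalization k (m + 1) * e2Moment (k - 1) (m + 1) := by
    obtain ⟨n, rfl⟩ := Nat.exists_eq_add_of_le' (one_le_two.trans hk)
    rw [hA' _ _ hk, hA' _ _ hk, Nat.add_sub_cancel]
    exact_mod_cast normalized_e2Moment_sub (by lia) m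
  obtain rfl | hk3 : 2 = k ∨ 2 < k := hk.eq_or_lt
  · rw [hdiff, e2Moment_one_succ, hA1, mul_zero, mul_zero]
  · rw [hdiff, hA' _ _ (by lia), momentNormalization_eq_mul_sub_one (by exact_mod_cast hk3),
      Nat.cast_mul, Nat.cast_sub hk, Nat.cast_pred (by lia), Nat.cast_ofNat, mul_assoc]
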